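/- With f(x⃗) := −Σ_{k=0}^{n} (k!/∏_{j=0}^{k}(β−j)) S_{n,k} and p_i(x⃗) := Σ_{k=1}^{n} (−k!/∏_{j=0}^{k}(β−j)) S_{n∖i, k−1}(x⃗), where S_{n∖i,k} is the k-th elementary symmetric polynomial in the variables {x_j : j ≠ i}, the following polynomial identity holds in F[x₁,…,x_n]: (Σ_{i=1}^{n} xᵢ − β) · f(x⃗) = 1 + Σ_{i=1}^{n} (xᵢ² − xᵢ) · p_i(x⃗). In particular, C(x⃗,y⃗) := y₀·f(x⃗) + Σᵢ yᵢ·(−p_i(x⃗)) is a y⃗-linear IPS certificate of unsatisfiability for the subset sum instance with axioms Σᵢ xᵢ − β and xᵢ² − xᵢ (i ∈ [n]). -/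

import Mathlib

open MvPolynomial

theorem aux_split {n : ℕ} {F : Type*} [Field F] (i : Fin n) (k : ℕ) :
    (∑ T ∈ (Finset.univ : Finset (Fin n)).powersetCard (k+1), ∏ j ∈ T, (X j : MvPolynomial (Fin n) F))
      = X i * ∑ T ∈ (Finset.univ.erase i).powersetCard k, ∏ j ∈ T, X j
        + ∑ T ∈ (Finset.univ.erase i).powersetCard (k+1), ∏ j ∈ T, X j := by
  have hn : i ∉ (Finset.univ : Finset (Fin n)).erase i := Finset.notMem_erase i _
  have hmem : ∀ {m : ℕ} {T : Finset (Fin n)},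
      T ∈ ((Finset.univ : Finset (Fin n)).erase i).powersetCard m → i ∉ T := by
    intro m T hT h
    exact hn ((Finset.mem_powersetCard.1 hT).1 h)
  conv_lhs => rw [← Finset.insert_erase (Finset.mem_univ i), Finset.powersetCard_succ_insert hn]
  rw [Finset.sum_union, Finset.sum_image, add_comm, Finset.mul_sum]
  · congr 1
    refine Finset.sum_congr rfl fun T hT => ?_
    rw [Finset.prod_insert (hmem hT)]
  · intro T hT U hU h
    rw [← Finset.erase_insert (hmem hT), ← Finset.erase_insert (hmem hU)]
    exact congrArg (fun V => Finset.erase V i) h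
  · rw [Finset.disjoint_left]
    intro T hT hT'
    obtain ⟨U, _, rfl⟩ := Finset.mem_image.1 hT'
    exact hmem hT (Finset.mem_insert_self _ _)

theorem aux_count {n : ℕ} {F : Type*} [Field F] (k : ℕ) :
    (∑ i : Fin n, X i * ∑ T ∈ (Finset.univ.erase i).powersetCard k,
        ∏ j ∈ T, (X j : MvPolynomial (Fin n) F))
      = ((k : MvPolynomial (Fin n) F) + 1) *
        ∑ T ∈ (Finset.univ : Finset (Fin n)).powersetCard (k+1), ∏ j ∈ T, X j := by
  have h : ∀ i : Fin n, X i * ∑ T ∈ (Finset.univ.erase i).powersetCard k,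
        ∏ j ∈ T, (X j : MvPolynomial (Fin n) F)
      = ∑ T ∈ (Finset.univ : Finset (Fin n)).powersetCard (k+1),
          if i ∈ T then ∏ j ∈ T, (X j : MvPolynomial (Fin n) F) else 0 := by
    intro i
    have h1 := aux_split (F := F) i k
    have h2 : (Finset.univ.erase i).powersetCard (k+1) =
        ((Finset.univ : Finset (Fin n)).powersetCard (k+1)).filter (fun T => i ∉ T) := by
      ext T
      simp [Finset.mem_powersetCard, Finset.subset_erase, and_comm]
    rw [h2, ← Finset.sum_filter_add_sum_filter_not _ (fun T => i ∈ T)] at h1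
    rw [← Finset.sum_filter]
    exact (add_right_cancel h1).symm
  rw [Finset.sum_congr rfl fun i _ => h i, Finset.sum_comm, Finset.mul_sum]
  refine Finset.sum_congr rfl fun T hT => ?_
  rw [Finset.sum_ite_mem, Finset.univ_inter, Finset.sum_const, (Finset.mem_powersetCard.1 hT).2,
    nsmul_eq_mul]
  push_cast
  ring



/-- The subset-sum refutation identity
`(Σᵢ xᵢ − β)·f = 1 + Σᵢ (xᵢ² − xᵢ)·pᵢ` in `F[x₁,…,xₙ]`, where `f` and the `pᵢ`
are built from elementary symmetric polynomials; consequently the `y`-linear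
polynomial `C = y₀·f + Σᵢ yᵢ·(−pᵢ)` is an IPS certificate for the subset sum
instance (it evaluates to `1` on the axioms and to `0` when all `y` are `0`). -/
theorem stmt7 (n : ℕ) (F : Type*) [Field F]
    (hchar : ringChar F = 0 ∨ n < ringChar F)
    (β : F) (hβ : ∀ j : ℕ, j ≤ n → β ≠ (j : F)) :
    let S : ℕ → MvPolynomial (Fin n) F := fun k =>
      ∑ T ∈ Finset.univ.powersetCard k, ∏ i ∈ T, X i
    let Si : Fin n → ℕ → MvPolynomial (Fin n) F := fun i k =>
      ∑ T ∈ (Finset.univ.erase i).powersetCard k, ∏ j ∈ T, X j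
    let f : MvPolynomial (Fin n) F :=
      -(∑ k ∈ Finset.range (n + 1),
          C ((k.factorial : F) / ∏ j ∈ Finset.range (k + 1), (β - (j : F))) * S k)
    let p : Fin n → MvPolynomial (Fin n) F := fun i =>
      ∑ k ∈ Finset.Icc 1 n,
        C (-(k.factorial : F) / ∏ j ∈ Finset.range (k + 1), (β - (j : F))) *
          Si i (k - 1)
    let Ccert : MvPolynomial (Fin n ⊕ Option (Fin n)) F :=
      X (Sum.inr none) * rename Sum.inl f +
        ∑ i : Fin n, X (Sum.inr (some i)) * rename Sum.inl (-(p i))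
    ((∑ i, X i) - C β) * f = 1 + ∑ i, (X i ^ 2 - X i) * p i ∧
    aeval (Sum.elim X (fun o : Option (Fin n) =>
        Option.elim o ((∑ i, X i) - C β) (fun i => X i ^ 2 - X i))) Ccert = 1 ∧
    aeval (Sum.elim X (fun _ : Option (Fin n) =>
        (0 : MvPolynomial (Fin n) F))) Ccert = 0 := by
  intro S Si f p Ccert
  have hA : ∀ k, ∑ i, X i * Si i k = ((k : MvPolynomial (Fin n) F) + 1) * S (k+1) :=
    fun k => aux_count k
  have hB : ∀ i k, S (k+1) = X i * Si i k + Si i (k+1) := fun i k => aux_split i k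
  have hS0 : S 0 = 1 := by simp [S]
  have hSi0 : ∀ i, Si i 0 = 1 := by intro i; simp [Si]
  have hSn : S (n+1) = 0 := by
    simp only [S]
    rw [Finset.powersetCard_eq_empty.2 (by simp), Finset.sum_empty]
  have hS1 : ∑ i, X i = S 1 := by
    have := hA 0
    simpa [hSi0] using this
  have hM : ∀ k, (∑ i, X i) * S (k+1) = ∑ i, (X i ^ 2 - X i) * Si i k
      + ((k : MvPolynomial (Fin n) F) + 1) * S (k+1)
      + ((k : MvPolynomial (Fin n) F) + 2) * S (k+2) := by
    intro k
    have h2 := hA (k+1)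
    push_cast at h2
    have h3 : ((k : MvPolynomial (Fin n) F) + 2) * S (k+2) = ∑ i, X i * Si i (k+1) := by
      rw [h2]; ring
    rw [h3, ← hA k, Finset.sum_mul, ← Finset.sum_add_distrib, ← Finset.sum_add_distrib]
    refine Finset.sum_congr rfl fun i _ => ?_
    rw [hB i k]; ring
  let c : ℕ → F := fun k => (k.factorial : F) / ∏ j ∈ Finset.range (k + 1), (β - (j : F))
  have hc0 : β * c 0 = 1 := by
    have : β ≠ 0 := by simpa using hβ 0 (Nat.zero_le _)
    simp [c, this]
  have hc : ∀ k, k + 1 ≤ n → β * c (k+1) = ((k:F)+1) * c (k+1) + ((k:F)+1) * c k := by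
    intro k hk
    have h1 : β - ((k:F)+1) ≠ 0 := by
      have := sub_ne_zero.2 (hβ (k+1) hk)
      push_cast at this
      exact this
    have h2 : ∏ j ∈ Finset.range (k + 1), (β - (j : F)) ≠ 0 := by
      refine Finset.prod_ne_zero_iff.2 fun j hj => sub_ne_zero.2 (hβ j ?_)
      have := Finset.mem_range.1 hj
      omega
    simp only [c]
    rw [Finset.prod_range_succ _ (k+1), Nat.factorial_succ]
    push_cast
    field_simp
    ring
  have key : ∀ m, m ≤ n → ((∑ i, X i) - C β) * (-(∑ k ∈ Finset.range (m+1), C (c k) * S k))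
      = 1 + ∑ k ∈ Finset.range m, -(C (c (k+1)) * ∑ i, (X i ^ 2 - X i) * Si i k)
        - ((m : MvPolynomial (Fin n) F) + 1) * C (c m) * S (m+1) := by
    intro m
    induction m with
    | zero =>
      intro _
      have h := congrArg (C : F → MvPolynomial (Fin n) F) hc0
      rw [C_mul, C_1] at h
      simp only [zero_add, Finset.sum_range_one, Finset.sum_range_zero, hS0, hS1, Nat.cast_zero]
      linear_combination h
    | succ m ih =>
      intro hm
      have h := congrArg (C : F → MvPolynomial (Fin n) F) (hc m hm)
      simp only [C_mul, C_add, C_1, map_natCast] at h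
      rw [Finset.sum_range_succ _ (m+1), Finset.sum_range_succ (fun k => -(C (c (k+1)) * ∑ i, (X i ^ 2 - X i) * Si i k)) m]
      push_cast
      linear_combination ih (by omega) - C (c (m+1)) * hM m + S (m+1) * h
  have main : ((∑ i, X i) - C β) * f = 1 + ∑ i, (X i ^ 2 - X i) * p i := by
    have h := key n le_rfl
    rw [hSn, mul_zero, sub_zero] at h
    refine h.trans ?_
    congr 1
    have hp : ∀ i, p i = ∑ k ∈ Finset.range n, -(C (c (k+1)) * Si i k) := by
      intro i
      simp only [p]
      rw [← Finset.Ico_succ_right_eq_Icc, Finset.sum_Ico_eq_sum_range]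
      simp only [Nat.succ_eq_succ, Nat.succ_eq_add_one, Nat.add_sub_cancel]
      refine Finset.sum_congr rfl fun k _ => ?_
      rw [add_comm 1 k, Nat.add_sub_cancel, neg_div, C_neg, neg_mul]
    simp only [hp, Finset.mul_sum]
    rw [Finset.sum_comm]
    refine Finset.sum_congr rfl fun k _ => ?_
    rw [← Finset.sum_neg_distrib]
    refine Finset.sum_congr rfl fun i _ => ?_
    ring
  have hren : ∀ (g : Option (Fin n) → MvPolynomial (Fin n) F) (q : MvPolynomial (Fin n) F),
      aeval (Sum.elim X g) (rename Sum.inl q) = q := by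
    intro g q
    rw [aeval_rename, Sum.elim_comp_inl, aeval_X_left_apply]
  refine ⟨main, ?_, ?_⟩
  · simp only [Ccert, map_add, map_mul, map_sum, hren, aeval_X, Sum.elim_inr, Option.elim]
    rw [main]
    simp [mul_neg, Finset.sum_neg_distrib]
  · simp only [Ccert, map_add, map_mul, map_sum, hren, aeval_X, Sum.elim_inr]
    simp
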